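/- If T and T* are finite trees, each with at least 3 vertices, then gp(T □ T*) ≥ gp(T) + gp(T*). -/

import Mathlib

open SimpleGraph

/-- A set `S` of vertices of `G` is a general position set if for every three
pairwise-distinct vertices `x, y, z ∈ S` one has `d(x,y) ≠ d(x,z) + d(z,y)`. -/
def IsGenPosSet {V : Type*} (G : SimpleGraph V) (S : Set V) : Prop :=
  ∀ x ∈ S, ∀ y ∈ S, ∀ z ∈ S, x ≠ y → x ≠ z → y ≠ z →
    G.dist x y ≠ G.dist x z + G.dist z y

/-- The general position number of a graph on a finite vertex type: the
cardinality of a largest general position set. -/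
noncomputable def genPosNum {V : Type*} [Fintype V] (G : SimpleGraph V) : ℕ :=
  sSup {n | ∃ S : Finset V, IsGenPosSet G ↑S ∧ S.card = n}

/-- A vertex is a leaf if it has exactly one neighbour (degree 1). -/
def IsLeaf {V : Type*} (G : SimpleGraph V) (v : V) : Prop :=
  ∃! w, G.Adj v w

section Tree

variable {V : Type*} {T : SimpleGraph V}

/-- In a tree, geodesics from the two ends of an edge to vertices on the respective sides of that
edge combine to a geodesic through the edge. -/
lemma SimpleGraph.IsTree.dist_eq_of_opposite_sides (hT : T.IsTree) {a c x b : V} (hac : T.Adj a c)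
    (hx : T.dist x c = T.dist x a + 1) (hb : T.dist b a = T.dist b c + 1) :
    T.dist x b = T.dist x a + 1 + T.dist c b := by
  classical
  obtain ⟨p, hp, hpl⟩ := hT.connected.exists_path_of_dist x a
  obtain ⟨q, hq, hql⟩ := hT.connected.exists_path_of_dist c b
  have hpath : (p.append (Walk.cons hac q)).IsPath := by
    rw [Walk.isPath_def, Walk.support_append, Walk.support_cons, List.tail_cons,
      List.nodup_append]
    refine ⟨hp.support_nodup, hq.support_nodup, ?_⟩
    rintro v hvp _ hvq rfl
    have hpv := congrArg Walk.length (p.take_spec hvp)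
    have hqv := congrArg Walk.length (q.take_spec hvq)
    rw [Walk.length_append] at hpv hqv
    have hxv := dist_le (p.takeUntil v hvp)
    have hva := dist_le (p.dropUntil v hvp)
    have hcv := dist_le (q.takeUntil v hvq)
    have hvb := dist_le (q.dropUntil v hvq)
    have hxvc := hT.connected.dist_triangle (u := x) (v := v) (w := c)
    have hbva := hT.connected.dist_triangle (u := b) (v := v) (w := a)
    rw [dist_comm (u := b) (v := c)] at hb
    rw [dist_comm (u := v) (v := c)] at hxvc
    rw [dist_comm (u := b) (v := v)] at hbva
    omega
  obtain ⟨r, hr, hrl⟩ := hT.connected.exists_path_of_dist x b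
  rw [← hrl, (hT.existsUnique_path x b).unique hr hpath, Walk.length_append, Walk.length_cons]
  omega

lemma SimpleGraph.Connected.exists_adj_dist_eq_add_one (hT : T.Connected) {a b : V} (hab : a ≠ b) :
    ∃ c, T.Adj a c ∧ T.dist b a = T.dist b c + 1 := by
  obtain ⟨p, hp⟩ := hT.exists_walk_length_eq_dist a b
  cases p with
  | nil => exact absurd rfl hab
  | @cons _ c _ hac q =>
    refine ⟨c, hac, ?_⟩
    rw [Walk.length_cons] at hp
    have hq := dist_le q
    have htri := hT.dist_triangle (u := a) (v := c) (w := b)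
    rw [dist_eq_one_iff_adj.mpr hac] at htri
    rw [dist_comm (u := b) (v := a), dist_comm (u := b) (v := c)]
    omega

/-- A vertex `c` outside `S` is an anchor of `S` if no vertex of `S` lies between another vertex
of `S` and `c`. -/
def IsAnchor (T : SimpleGraph V) (S : Set V) (c : V) : Prop :=
  c ∉ S ∧ ∀ x ∈ S, ∀ y ∈ S, x ≠ y → T.dist x c ≠ T.dist x y + T.dist y c

/-- In a tree, a general position set with three distinct vertices `a`, `b`, `d` has as anchor
the neighbour of `a` towards `b`. -/
lemma IsGenPosSet.exists_isAnchor (hT : T.IsTree) {S : Set V} (hS : IsGenPosSet T S)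
    {a b d : V} (ha : a ∈ S) (hb : b ∈ S) (hd : d ∈ S) (hab : a ≠ b) (had : a ≠ d)
    (hbd : b ≠ d) : ∃ c, IsAnchor T S c := by
  obtain ⟨c, hac, hbc⟩ := hT.connected.exists_adj_dist_eq_add_one hab
  have hac1 : T.dist a c = 1 := dist_eq_one_iff_adj.mpr hac
  have hca1 : T.dist c a = 1 := dist_eq_one_iff_adj.mpr hac.symm
  have hcS : c ∉ S := by
    intro hc
    by_cases hcb : c = b
    · subst hcb
      rcases hT.dist_eq_dist_add_one_of_adj d hac with h | h
      · exact hS d hd a ha c hc had.symm hbd.symm hac.ne (by omega)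
      · exact hS d hd c hc a ha hbd.symm had.symm hac.ne.symm (by omega)
    · exact hS b hb a ha c hc hab.symm (Ne.symm hcb) hac.ne (by omega)
  refine ⟨c, hcS, fun x hx y hy hxy h => ?_⟩
  have hyc : T.dist y c ≠ 0 := fun h0 =>
    hcS (hT.connected.dist_eq_zero_iff.mp h0 ▸ hy)
  have hxy0 : T.dist x y ≠ 0 := fun h0 => hxy (hT.connected.dist_eq_zero_iff.mp h0)
  have hxa : x ≠ a := by
    rintro rfl
    omega
  by_cases hya : y = a
  · subst hya
    have hxb : x ≠ b := by
      rintro rfl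
      omega
    have := hT.dist_eq_of_opposite_sides (x := x) hac (by omega) hbc
    rw [dist_comm (u := b), dist_comm (u := b) (v := c)] at hbc
    exact hS x hx b hb y hy hxb hxy hab.symm (by omega)
  · have hxya := hS x hx a ha y hy hxa hxy (Ne.symm hya)
    have htri := hT.connected.dist_triangle (u := x) (v := y) (w := a)
    rcases hT.dist_eq_dist_add_one_of_adj x hac with h1 | h1 <;>
    rcases hT.dist_eq_dist_add_one_of_adj y hac with h2 | h2
    · omega
    · omega
    · have := hT.dist_eq_of_opposite_sides hac h1 h2
      rw [dist_comm (u := c)] at this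
      omega
    · omega

lemma isGenPosSet_pair (G : SimpleGraph V) (u v : V) : IsGenPosSet G {u, v} := by
  rintro x hx y hy z hz hxy hxz hyz
  simp only [Set.mem_insert_iff, Set.mem_singleton_iff] at hx hy hz
  grind

/-- A tree with at least three vertices has an anchored pair of distinct vertices. -/
lemma SimpleGraph.IsTree.exists_isAnchor_pair [Fintype V] (hT : T.IsTree)
    (hV : 3 ≤ Fintype.card V) : ∃ u v c, u ≠ v ∧ IsAnchor T {u, v} c := by
  obtain ⟨a, b, d, hab, had, hbd⟩ := Fintype.two_lt_card_iff.mp hV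
  obtain ⟨c, hac, -⟩ := hT.connected.exists_adj_dist_eq_add_one hab
  obtain ⟨e, hea, hec⟩ : ∃ e, e ≠ a ∧ e ≠ c := by
    by_cases hcb : c = b
    · exact ⟨d, had.symm, hcb ▸ hbd.symm⟩
    · exact ⟨b, hab.symm, Ne.symm hcb⟩
  have key : ∀ u c, T.Adj u c → e ≠ u → e ≠ c → T.dist e u = T.dist e c + 1 →
      ∃ u v c, u ≠ v ∧ IsAnchor T {u, v} c := by
    intro u c huc heu hec h
    refine ⟨u, e, c, heu.symm, ?_, ?_⟩
    · simp [huc.ne.symm, hec.symm]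
    · have huc1 : T.dist u c = 1 := dist_eq_one_iff_adj.mpr huc
      have hec0 := hT.connected.pos_dist_of_ne hec
      have heu0 := hT.connected.pos_dist_of_ne heu
      have := dist_comm (G := T) (u := u) (v := e)
      rintro x (rfl | rfl) y (rfl | rfl) hxy <;> first | exact absurd rfl hxy | omega
  rcases hT.dist_eq_dist_add_one_of_adj e hac with h | h
  · exact key a c hac hea hec h
  · exact key c a hac.symm hec hea h

lemma bddAbove_card_isGenPosSet [Fintype V] (G : SimpleGraph V) :
    BddAbove {n | ∃ S : Finset V, IsGenPosSet G ↑S ∧ S.card = n} :=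
  ⟨Fintype.card V, by rintro _ ⟨S, -, rfl⟩; exact S.card_le_univ⟩

lemma IsGenPosSet.card_le_genPosNum [Fintype V] {G : SimpleGraph V} {S : Finset V}
    (hS : IsGenPosSet G ↑S) : S.card ≤ genPosNum G :=
  le_csSup (bddAbove_card_isGenPosSet G) ⟨S, hS, rfl⟩

lemma exists_isGenPosSet_card_eq_genPosNum [Fintype V] (G : SimpleGraph V) :
    ∃ S : Finset V, IsGenPosSet G ↑S ∧ S.card = genPosNum G :=
  Nat.sSup_mem (s := {n | ∃ S : Finset V, IsGenPosSet G ↑S ∧ S.card = n})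
    ⟨0, ∅, by simp [IsGenPosSet], rfl⟩ (bddAbove_card_isGenPosSet G)

lemma SimpleGraph.IsTree.exists_isGenPosSet_isAnchor [Fintype V] (hT : T.IsTree)
    (hV : 3 ≤ Fintype.card V) :
    ∃ (S : Finset V) (c : V), IsGenPosSet T ↑S ∧ IsAnchor T ↑S c ∧ genPosNum T ≤ S.card := by
  classical
  obtain ⟨S, hS, hcard⟩ := exists_isGenPosSet_card_eq_genPosNum T
  by_cases h3 : 2 < S.card
  · obtain ⟨a, b, d, ha, hb, hd, hab, had, hbd⟩ := Finset.two_lt_card_iff.mp h3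
    obtain ⟨c, hc⟩ := hS.exists_isAnchor hT ha hb hd hab had hbd
    exact ⟨S, c, hS, hc, hcard.ge⟩
  · obtain ⟨u, v, c, huv, hc⟩ := hT.exists_isAnchor_pair hV
    refine ⟨{u, v}, c, ?_, ?_, ?_⟩
    · simpa using isGenPosSet_pair T u v
    · simpa using hc
    · rw [Finset.card_pair huv]
      omega

end Tree

lemma SimpleGraph.Connected.dist_boxProd {V W : Type*} {G : SimpleGraph V} {H : SimpleGraph W}
    (hG : G.Connected) (hH : H.Connected) (x y : V × W) :
    (G □ H).dist x y = G.dist x.1 y.1 + H.dist x.2 y.2 := by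
  rw [dist, edist_boxProd, ENat.toNat_add (edist_ne_top_iff_reachable.mpr (hG _ _))
    (edist_ne_top_iff_reachable.mpr (hH _ _)), dist, dist]

/-- Anchored general position sets in the two factors form a cross in general position. -/
lemma IsGenPosSet.boxProd_cross {V W : Type*} {G : SimpleGraph V} {H : SimpleGraph W}
    (hG : G.Connected) (hH : H.Connected) {S : Set V} {S' : Set W} {c : V} {c' : W}
    (hS : IsGenPosSet G S) (hS' : IsGenPosSet H S') (hc : IsAnchor G S c)
    (hc' : IsAnchor H S' c') :
    IsGenPosSet (G □ H) ((fun s => (s, c')) '' S ∪ (fun s => (c, s)) '' S') := by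
  have hpos : ∀ s ∈ S, 0 < G.dist s c := fun s hs =>
    hG.pos_dist_of_ne (ne_of_mem_of_not_mem hs hc.1)
  have hpos' : ∀ s ∈ S', 0 < H.dist s c' := fun s hs =>
    hH.pos_dist_of_ne (ne_of_mem_of_not_mem hs hc'.1)
  rintro _ (⟨x, hx, rfl⟩ | ⟨x, hx, rfl⟩) _ (⟨y, hy, rfl⟩ | ⟨y, hy, rfl⟩) _
    (⟨z, hz, rfl⟩ | ⟨z, hz, rfl⟩) hxy hxz hyz <;>
  simp only [hG.dist_boxProd hH, dist_self, ne_eq, Prod.mk.injEq, and_true, true_and] at * <;>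
  intro h
  · exact hS x hx y hy z hz hxy hxz hyz (by omega)
  · have := hG.dist_triangle (u := x) (v := c) (w := y)
    have := hpos' z hz
    omega
  · exact hc.2 x hx z hz hxz (by omega)
  · have := dist_comm (G := H) (u := c') (v := y)
    have := dist_comm (G := H) (u := c') (v := z)
    have := dist_comm (G := H) (u := z) (v := y)
    exact hc'.2 y hy z hz hyz (by omega)
  · have := dist_comm (G := G) (u := c) (v := y)
    have := dist_comm (G := G) (u := c) (v := z)
    have := dist_comm (G := G) (u := z) (v := y)
    exact hc.2 y hy z hz hyz (by omega)
  · exact hc'.2 x hx z hz hxz (by omega)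
  · have := hH.dist_triangle (u := x) (v := c') (w := y)
    have := hpos z hz
    have := dist_comm (G := G) (u := c) (v := z)
    omega
  · exact hS' x hx y hy z hz hxy hxz hyz (by omega)

/-- If `T` and `T*` are finite trees, each with at least 3 vertices, then
`gp(T □ T*) ≥ gp(T) + gp(T*)`. -/
theorem gp_boxProd_trees_ge {V W : Type*} [Fintype V] [Fintype W]
    (T : SimpleGraph V) (T' : SimpleGraph W)
    (hT : T.IsTree) (hT' : T'.IsTree)
    (hV : 3 ≤ Fintype.card V) (hW : 3 ≤ Fintype.card W) :
    genPosNum T + genPosNum T' ≤ genPosNum (T □ T') := by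
  classical
  obtain ⟨S, c, hS, hc, hcard⟩ := hT.exists_isGenPosSet_isAnchor hV
  obtain ⟨S', c', hS', hc', hcard'⟩ := hT'.exists_isGenPosSet_isAnchor hW
  have hcross := IsGenPosSet.boxProd_cross hT.connected hT'.connected hS hS' hc hc'
  have hle := IsGenPosSet.card_le_genPosNum
    (S := S.image (fun s => (s, c')) ∪ S'.image (fun s => (c, s))) (by simpa using hcross)
  have hdisj : Disjoint (S.image (fun s => (s, c'))) (S'.image (fun s => (c, s))) := by
    rw [Finset.disjoint_left]
    simp only [Finset.mem_image]
    rintro _ ⟨s, hs, rfl⟩ ⟨t, -, ht⟩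
    exact hc.1 ((Prod.mk.inj ht).1 ▸ hs)
  rw [Finset.card_union_of_disjoint hdisj,
    Finset.card_image_of_injective _ (Prod.mk_left_injective c'),
    Finset.card_image_of_injective _ (Prod.mk_right_injective c)] at hle
  omega
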